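/- For all FNM guarded processes p, q, r the following laws hold up to structure-preserving bisimilarity: p + (q + r) ~sp (p + q) + r (associativity); p + q ~sp q + p (commutativity); p + 0 ~sp p provided p ≠ 0 (identity); and p + p ~sp p provided p ≠ 0 (idempotency). -/

import Mathlib

/-- Actions of FNM: the invisible action τ, input actions `a ∈ L` and
output actions `ā ∈ L̄` (here `α` plays the role of the finite set `L`). -/
inductive Act (α : Type) where
  | tau : Act α
  | inp : α → Act α
  | out : α → Act α
  deriving DecidableEq

/-- (Open) FNM terms: `0`, the variable `x`, action prefixing `mu.t`, strong
prefixing `a̲.s`, choice `s+s`, constants `C`, parallel `t|t` and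
restriction `(νa)p`.  The syntactic categories are carved out below. -/
inductive FNM (α κ : Type) where
  | nil : FNM α κ
  | var : FNM α κ
  | pref : Act α → FNM α κ → FNM α κ
  | spref : α → FNM α κ → FNM α κ
  | sum : FNM α κ → FNM α κ → FNM α κ
  | const : κ → FNM α κ
  | par : FNM α κ → FNM α κ → FNM α κ
  | res : α → FNM α κ → FNM α κ
  deriving DecidableEq

namespace FNM

variable {α κ : Type}

mutual
  /-- Guarded terms: syntactic category `s ::= 0 | mu.t | a̲.s | s+s`
  (with `t` restriction-free). -/
  def Grd : FNM α κ → Prop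
    | .nil => True
    | .var => False
    | .pref _ t => RF t
    | .spref _ s => Grd s
    | .sum s1 s2 => Grd s1 ∧ Grd s2
    | .const _ => False
    | .par _ _ => False
    | .res _ _ => False
  /-- Restriction-free terms: syntactic category `t ::= q | t|t`, where
  `q ::= s | C | x` is the category of sequential terms. -/
  def RF : FNM α κ → Prop
    | .nil => True
    | .var => True
    | .pref _ t => RF t
    | .spref _ s => Grd s
    | .sum s1 s2 => Grd s1 ∧ Grd s2
    | .const _ => True
    | .par t1 t2 => RF t1 ∧ RF t2
    | .res _ _ => False
end

/-- Sequential terms: `q ::= s | C | x`. -/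
def Seq (t : FNM α κ) : Prop :=
  Grd t ∨ (∃ c, t = FNM.const c) ∨ t = FNM.var

/-- General terms: `p ::= t | (νa)p`. -/
def Gen : FNM α κ → Prop
  | .res _ p => Gen p
  | t => RF t

/-- Closed terms: no occurrence of the variable. -/
def VarFree : FNM α κ → Prop
  | .nil => True
  | .var => False
  | .pref _ t => VarFree t
  | .spref _ s => VarFree s
  | .sum s1 s2 => VarFree s1 ∧ VarFree s2
  | .const _ => True
  | .par t1 t2 => VarFree t1 ∧ VarFree t2
  | .res _ p => VarFree p

/-- Substitution `p{r/x}` of the term `r` for every occurrence of the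
variable `x` in `p` (constants are dealt with via the environment). -/
def subst (r : FNM α κ) : FNM α κ → FNM α κ
  | .nil => .nil
  | .var => r
  | .pref mu t => .pref mu (subst r t)
  | .spref a s => .spref a (subst r s)
  | .sum s1 s2 => .sum (subst r s1) (subst r s2)
  | .const c => .const c
  | .par t1 t2 => .par (subst r t1) (subst r t2)
  | .res a p => .res a (subst r p)

/-- `mu` uses the name `a`. -/
def _root_.Act.uses (a : α) : Act α → Prop
  | .tau => False
  | .inp b => b = a
  | .out b => b = a

/-- `a` occurs free in a term (through an environment `env` giving the body
of each process constant). -/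
inductive FreeIn (env : κ → FNM α κ) (a : α) : FNM α κ → Prop where
  | pref_act {mu : Act α} {t : FNM α κ} : mu.uses a → FreeIn env a (.pref mu t)
  | pref_cont {mu : Act α} {t : FNM α κ} : FreeIn env a t → FreeIn env a (.pref mu t)
  | spref_act {s : FNM α κ} : FreeIn env a (.spref a s)
  | spref_cont {b : α} {s : FNM α κ} : FreeIn env a s → FreeIn env a (.spref b s)
  | sum_l {s1 s2 : FNM α κ} : FreeIn env a s1 → FreeIn env a (.sum s1 s2)
  | sum_r {s1 s2 : FNM α κ} : FreeIn env a s2 → FreeIn env a (.sum s1 s2)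
  | par_l {t1 t2 : FNM α κ} : FreeIn env a t1 → FreeIn env a (.par t1 t2)
  | par_r {t1 t2 : FNM α κ} : FreeIn env a t2 → FreeIn env a (.par t1 t2)
  | res {b : α} {p : FNM α κ} : a ≠ b → FreeIn env a p → FreeIn env a (.res b p)
  | const {c : κ} : FreeIn env a (env c) → FreeIn env a (.const c)

/-- `a` occurs bound (by a restriction) in a term. -/
inductive BoundIn (env : κ → FNM α κ) (a : α) : FNM α κ → Prop where
  | res_here {p : FNM α κ} : BoundIn env a (.res a p)
  | res_in {b : α} {p : FNM α κ} : BoundIn env a p → BoundIn env a (.res b p)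
  | pref {mu : Act α} {t : FNM α κ} : BoundIn env a t → BoundIn env a (.pref mu t)
  | spref {b : α} {s : FNM α κ} : BoundIn env a s → BoundIn env a (.spref b s)
  | sum_l {s1 s2 : FNM α κ} : BoundIn env a s1 → BoundIn env a (.sum s1 s2)
  | sum_r {s1 s2 : FNM α κ} : BoundIn env a s2 → BoundIn env a (.sum s1 s2)
  | par_l {t1 t2 : FNM α κ} : BoundIn env a t1 → BoundIn env a (.par t1 t2)
  | par_r {t1 t2 : FNM α κ} : BoundIn env a t2 → BoundIn env a (.par t1 t2)
  | const {c : κ} : BoundIn env a (env c) → BoundIn env a (.const c)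

end FNM

/-- A place of the net `N_FNM`: a sequential (extended) term, rendered as a
pure sequential term together with the record `ρ : α → Bool` of which names
have been replaced by their restricted counterparts (`ρ a = true` represents
the substitution `{a'/a}`). -/
abbrev Place (α κ : Type) := FNM α κ × (α → Bool)

namespace FNM

variable {α κ : Type} [DecidableEq α] [DecidableEq κ] [Fintype α]

/-- The decomposition function `dec`, mapping (extended) terms to markings:
`dec(0) = θ`, `dec(p|q) = dec(p) ⊕ dec(q)`, `dec((νa)p) = dec(p){a'/a}`, and
a sequential term other than `0` is mapped to a single place. -/
def dec (ρ : α → Bool) : FNM α κ → Multiset (Place α κ)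
  | .nil => 0
  | .par t1 t2 => dec ρ t1 + dec ρ t2
  | .res a p => dec (Function.update ρ a true) p
  | t => {(t, ρ)}

end FNM

/-- Extended visible actions: inputs and outputs, possibly restricted
(`inp a true` represents `a'`, `out a false` represents `ā`, etc.). -/
inductive XAct (α : Type) where
  | inp : α → Bool → XAct α
  | out : α → Bool → XAct α

/-- Labels of net transitions: `τ` is the empty sequence, and otherwise a
sequence of extended actions. -/
abbrev Lbl (α : Type) := List (XAct α)

/-- An extended action carries no restricted name. -/
def XAct.unres {α : Type} : XAct α → Prop
  | .inp _ r => r = false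
  | .out _ r => r = false

/-- The label contributed by prefix `mu` under the restriction record `ρ`. -/
def actL {α : Type} (ρ : α → Bool) : Act α → Lbl α
  | .tau => []
  | .inp a => [XAct.inp a (ρ a)]
  | .out a => [XAct.out a (ρ a)]

/-- The synchronization relation `Sync(σ1, σ2, σ)`: `Sync(α, ᾱ, τ)`,
`Sync(aσ, ā, σ)` and `Sync(ā, aσ, σ)` for `σ ≠ ε` (also on restricted
actions). -/
inductive Sync {α : Type} : Lbl α → Lbl α → Lbl α → Prop where
  | inout (a : α) (r : Bool) : Sync [XAct.inp a r] [XAct.out a r] []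
  | outin (a : α) (r : Bool) : Sync [XAct.out a r] [XAct.inp a r] []
  | seqL (a : α) (r : Bool) (σ : Lbl α) :
      σ ≠ [] → Sync (XAct.inp a r :: σ) [XAct.out a r] σ
  | seqR (a : α) (r : Bool) (σ : Lbl α) :
      σ ≠ [] → Sync [XAct.out a r] (XAct.inp a r :: σ) σ

namespace FNM

variable {α κ : Type} [DecidableEq α] [DecidableEq κ] [Fintype α]

/-- A marking is admissible if for no name `a` both `a` and its restricted
counterpart `a'` occur free in it. -/
def Adm (env : κ → FNM α κ) (m : Multiset (Place α κ)) : Prop :=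
  ∀ a : α, ¬ ((∃ p ∈ m, FreeIn env a p.1 ∧ p.2 a = false) ∧
              (∃ p ∈ m, FreeIn env a p.1 ∧ p.2 a = true))

/-- The net transitions of `N_FNM`, generated by the rules (pref), (sum₁),
(sum₂), (cons), (s-pref) and (s-com). -/
inductive Tr (env : κ → FNM α κ) :
    Multiset (Place α κ) → Lbl α → Multiset (Place α κ) → Prop where
  | pref (ρ : α → Bool) (mu : Act α) (t : FNM α κ) :
      Tr env {(FNM.pref mu t, ρ)} (actL ρ mu) (dec ρ t)
  | sum1 (ρ : α → Bool) (s1 s2 : FNM α κ) (σ : Lbl α) (m : Multiset (Place α κ)) :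
      Tr env (dec ρ s1) σ m → Tr env {(FNM.sum s1 s2, ρ)} σ m
  | sum2 (ρ : α → Bool) (s1 s2 : FNM α κ) (σ : Lbl α) (m : Multiset (Place α κ)) :
      Tr env (dec ρ s2) σ m → Tr env {(FNM.sum s1 s2, ρ)} σ m
  | cons (ρ : α → Bool) (c : κ) (σ : Lbl α) (m : Multiset (Place α κ)) :
      Tr env (dec ρ (env c)) σ m → Tr env {(FNM.const c, ρ)} σ m
  | spref (ρ : α → Bool) (a : α) (s : FNM α κ) (σ : Lbl α) (m : Multiset (Place α κ)) :
      Tr env (dec ρ s) σ m →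
      Tr env {(FNM.spref a s, ρ)} (XAct.inp a (ρ a) :: σ) m
  | scom (m1 m2 m1' m2' : Multiset (Place α κ)) (σ1 σ2 σ : Lbl α) :
      Tr env m1 σ1 m1' → Tr env m2 σ2 m2' →
      Adm env (m1 + m2) → Sync σ1 σ2 σ →
      Tr env (m1 + m2) σ (m1' + m2')

/-- Tritions of the net `N_FNM`: only those whose label contains no
restricted action are kept. -/
def NetTr (env : κ → FNM α κ) (m : Multiset (Place α κ)) (σ : Lbl α)
    (m' : Multiset (Place α κ)) : Prop :=
  Tr env m σ m' ∧ ∀ x ∈ σ, x.unres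

/-- First projection of a linking. -/
def pi1 (l : Multiset (Place α κ × Place α κ)) : Multiset (Place α κ) :=
  l.map Prod.fst

/-- Second projection of a linking. -/
def pi2 (l : Multiset (Place α κ × Place α κ)) : Multiset (Place α κ) :=
  l.map Prod.snd

/-- Structure-preserving bisimulation on the net `N_FNM`. -/
def IsSPB (env : κ → FNM α κ) (R : Set (Multiset (Place α κ × Place α κ))) : Prop :=
  ∀ l ∈ R, ∀ c ≤ l,
    (∀ σ m1, NetTr env (pi1 c) σ m1 →
      ∃ m2 cb, NetTr env (pi2 c) σ m2 ∧
        pi1 cb = m1 ∧ pi2 cb = m2 ∧ l - c + cb ∈ R) ∧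
    (∀ σ m2, NetTr env (pi2 c) σ m2 →
      ∃ m1 cb, NetTr env (pi1 c) σ m1 ∧
        pi1 cb = m1 ∧ pi2 cb = m2 ∧ l - c + cb ∈ R)

/-- `p ~sp q`: some structure-preserving bisimulation contains a linking
projecting on `dec(p)` and `dec(q)`. -/
def SPEq (env : κ → FNM α κ) (p q : FNM α κ) : Prop :=
  ∃ R, IsSPB env R ∧ ∃ l ∈ R,
    pi1 l = dec (fun _ => false) p ∧ pi2 l = dec (fun _ => false) q

end FNM

/-!
When every link joins a place to itself, a transition is answered by the same transition, with its
target tokens again linked to themselves. Hence two places with the same outgoing net transitions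
are sp-bisimilar: link them to each other, and answer every step by reaching the same marking. The
four laws then reduce to the laws of disjunction, since the transitions of a choice are those of
either summand and `0` has none.
-/

namespace FNM

variable {α κ : Type}

section Diagonal

variable {l c : Multiset (Place α κ × Place α κ)}

/-- The identity linking on the marking `m`, in which every token is linked to itself. -/
def idLinking (m : Multiset (Place α κ)) : Multiset (Place α κ × Place α κ) :=
  m.map fun x => (x, x)

/-- The linkings all of whose links join a place to itself. They form an sp-bisimulation, and they
are the linkings reached by the first step of a choice law. -/
def diagonalLinkings : Set (Multiset (Place α κ × Place α κ)) :=
  {l | ∀ z ∈ l, z.1 = z.2}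

theorem pi1_idLinking (m : Multiset (Place α κ)) : pi1 (idLinking m) = m := by
  simp [pi1, idLinking]

theorem pi2_idLinking (m : Multiset (Place α κ)) : pi2 (idLinking m) = m := by
  simp [pi2, idLinking]

theorem add_idLinking_mem_diagonalLinkings (hl : l ∈ diagonalLinkings)
    (m : Multiset (Place α κ)) : l + idLinking m ∈ diagonalLinkings := by
  intro z hz
  rcases Multiset.mem_add.mp hz with hz | hz
  · exact hl z hz
  · obtain ⟨x, -, rfl⟩ := Multiset.mem_map.mp hz
    rfl

theorem mem_diagonalLinkings_of_le (hl : l ∈ diagonalLinkings) (hc : c ≤ l) :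
    c ∈ diagonalLinkings :=
  fun z hz => hl z (Multiset.mem_of_le hc hz)

theorem pi1_eq_pi2_of_mem_diagonalLinkings (hl : l ∈ diagonalLinkings) : pi1 l = pi2 l :=
  Multiset.map_congr rfl hl

end Diagonal

variable [DecidableEq α] {env : κ → FNM α κ} {p q r : FNM α κ}

section Transitions

variable {ρ : α → Bool} {σ : Lbl α} {m m' : Multiset (Place α κ)}

theorem dec_sum : dec ρ (sum p q) = {(sum p q, ρ)} := by
  rw [dec] <;> simp

theorem Seq.dec_eq_singleton (hp : Seq p) (hp0 : p ≠ nil) : dec ρ p = {(p, ρ)} := by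
  cases p <;> simp_all [Seq, Grd, dec]

theorem Tr.source_ne_zero (h : Tr env m σ m') : m ≠ 0 := by
  induction h with
  | scom _ _ _ _ _ _ _ _ _ _ _ ih₁ _ => exact fun h => ih₁ (add_eq_zero.mp h).1
  | _ => exact Multiset.singleton_ne_zero _

theorem not_netTr_zero : ¬ NetTr env 0 σ m :=
  fun h => h.1.source_ne_zero rfl

theorem tr_dec_sum_iff :
    Tr env (dec ρ (sum p q)) σ m ↔ Tr env (dec ρ p) σ m ∨ Tr env (dec ρ q) σ m := by
  rw [dec_sum]
  refine ⟨fun h => ?_, fun h => h.elim (Tr.sum1 ρ p q σ m) (Tr.sum2 ρ p q σ m)⟩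
  generalize hs : ({(sum p q, ρ)} : Multiset (Place α κ)) = s at h
  cases h with
  | sum1 _ _ _ _ _ h => cases Multiset.singleton_inj.mp hs; exact Or.inl h
  | sum2 _ _ _ _ _ h => cases Multiset.singleton_inj.mp hs; exact Or.inr h
  | scom _ _ _ _ _ _ _ h₁ h₂ _ _ =>
    have hcard := congrArg Multiset.card hs
    have h₁pos := Multiset.card_pos.mpr h₁.source_ne_zero
    have h₂pos := Multiset.card_pos.mpr h₂.source_ne_zero
    rw [Multiset.card_singleton, Multiset.card_add] at hcard
    omega
  | _ => cases Multiset.singleton_inj.mp hs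

theorem netTr_dec_sum_iff :
    NetTr env (dec ρ (sum p q)) σ m ↔ NetTr env (dec ρ p) σ m ∨ NetTr env (dec ρ q) σ m := by
  simp only [NetTr, tr_dec_sum_iff, or_and_right]

end Transitions

variable [DecidableEq κ] [Fintype α]

section Bisimulation

variable {l c : Multiset (Place α κ × Place α κ)} {R : Set (Multiset (Place α κ × Place α κ))}

/-- The transfer condition of an sp-bisimulation at a single sublinking `c` of `l`: each transition
from one projection of `c` is answered from the other so that the updated linking is in `R`. -/
def Transfers (env : κ → FNM α κ) (R : Set (Multiset (Place α κ × Place α κ)))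
    (l c : Multiset (Place α κ × Place α κ)) : Prop :=
  (∀ σ m₁, NetTr env (pi1 c) σ m₁ →
    ∃ m₂ c', NetTr env (pi2 c) σ m₂ ∧ pi1 c' = m₁ ∧ pi2 c' = m₂ ∧ l - c + c' ∈ R) ∧
  (∀ σ m₂, NetTr env (pi2 c) σ m₂ →
    ∃ m₁ c', NetTr env (pi1 c) σ m₁ ∧ pi1 c' = m₁ ∧ pi2 c' = m₂ ∧ l - c + c' ∈ R)

theorem transfers_zero : Transfers env R l 0 :=
  ⟨fun _ _ h => absurd h not_netTr_zero, fun _ _ h => absurd h not_netTr_zero⟩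

theorem transfers_of_netTr_iff (hR : diagonalLinkings ⊆ R) (hlc : l - c ∈ diagonalLinkings)
    (h : ∀ σ m, NetTr env (pi1 c) σ m ↔ NetTr env (pi2 c) σ m) : Transfers env R l c := by
  have hmem (m) : l - c + idLinking m ∈ R := hR (add_idLinking_mem_diagonalLinkings hlc m)
  exact ⟨fun σ m hm => ⟨m, idLinking m, (h σ m).mp hm, pi1_idLinking m, pi2_idLinking m, hmem m⟩,
    fun σ m hm => ⟨m, idLinking m, (h σ m).mpr hm, pi1_idLinking m, pi2_idLinking m, hmem m⟩⟩

theorem isSPB_insert_diagonalLinkings {x y : Place α κ}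
    (h : ∀ σ m, NetTr env {x} σ m ↔ NetTr env {y} σ m) :
    IsSPB env (insert {(x, y)} diagonalLinkings) := by
  intro l hl c hc
  change Transfers env _ l c
  rcases hl with rfl | hl
  · rcases Multiset.le_singleton.mp hc with rfl | rfl
    · exact transfers_zero
    · exact transfers_of_netTr_iff (Set.subset_insert _ _) (by simp [diagonalLinkings]) h
  · have hpi : pi1 c = pi2 c :=
      pi1_eq_pi2_of_mem_diagonalLinkings (mem_diagonalLinkings_of_le hl hc)
    exact transfers_of_netTr_iff (Set.subset_insert _ _)
      (mem_diagonalLinkings_of_le hl (Multiset.sub_le_self l c)) fun σ m => by rw [hpi]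

theorem speq_of_netTr_iff {x y : Place α κ}
    (hp : dec (fun _ => false) p = {x}) (hq : dec (fun _ => false) q = {y})
    (h : ∀ σ m, NetTr env (dec (fun _ => false) p) σ m ↔ NetTr env (dec (fun _ => false) q) σ m) :
    SPEq env p q := by
  rw [hp, hq] at h
  exact ⟨_, isSPB_insert_diagonalLinkings h, {(x, y)}, Set.mem_insert _ _, hp.symm, hq.symm⟩

end Bisimulation

theorem speq_sum_assoc : SPEq env (sum p (sum q r)) (sum (sum p q) r) :=
  speq_of_netTr_iff dec_sum dec_sum fun _ _ => by simp only [netTr_dec_sum_iff, or_assoc]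

theorem speq_sum_comm : SPEq env (sum p q) (sum q p) :=
  speq_of_netTr_iff dec_sum dec_sum fun _ _ => by
    rw [netTr_dec_sum_iff, netTr_dec_sum_iff, or_comm]

theorem speq_sum_nil (hp : Seq p) (hp0 : p ≠ nil) : SPEq env (sum p nil) p :=
  speq_of_netTr_iff dec_sum (hp.dec_eq_singleton hp0) fun _ _ =>
    netTr_dec_sum_iff.trans (or_iff_left not_netTr_zero)

theorem speq_sum_self (hp : Seq p) (hp0 : p ≠ nil) : SPEq env (sum p p) p :=
  speq_of_netTr_iff dec_sum (hp.dec_eq_singleton hp0) fun _ _ => by rw [netTr_dec_sum_iff, or_self]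

end FNM

open FNM in
theorem speq_choice_laws_general {α κ : Type} [DecidableEq α] [DecidableEq κ] [Fintype α]
    (env : κ → FNM α κ) (p q r : FNM α κ) :
    SPEq env (FNM.sum p (FNM.sum q r)) (FNM.sum (FNM.sum p q) r) ∧
    SPEq env (FNM.sum p q) (FNM.sum q p) ∧
    (Seq p → p ≠ FNM.nil → SPEq env (FNM.sum p FNM.nil) p) ∧
    (Seq p → p ≠ FNM.nil → SPEq env (FNM.sum p p) p) :=
  ⟨speq_sum_assoc, speq_sum_comm, speq_sum_nil, speq_sum_self⟩

open FNM in
/-- laws of the choice operator, up to structure-preserving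
bisimilarity: associativity, commutativity, identity (`p + 0 ~sp p` if
`p ≠ 0`) and idempotency (`p + p ~sp p` if `p ≠ 0`), for all FNM guarded
processes `p, q, r`. -/
theorem speq_choice_laws {α κ : Type} [DecidableEq α] [DecidableEq κ]
    [Fintype α] [Finite κ]
    (env : κ → FNM α κ) (henv : ∀ c, Grd (env c) ∧ VarFree (env c))
    (p q r : FNM α κ) (hp : Grd p) (hq : Grd q) (hr : Grd r)
    (hpv : VarFree p) (hqv : VarFree q) (hrv : VarFree r) :
    SPEq env (FNM.sum p (FNM.sum q r)) (FNM.sum (FNM.sum p q) r) ∧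
    SPEq env (FNM.sum p q) (FNM.sum q p) ∧
    (p ≠ FNM.nil → SPEq env (FNM.sum p FNM.nil) p) ∧
    (p ≠ FNM.nil → SPEq env (FNM.sum p p) p) := by
  obtain ⟨assoc, comm, ident, idem⟩ := speq_choice_laws_general env p q r
  exact ⟨assoc, comm, ident (Or.inl hp), idem (Or.inl hp)⟩
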